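/- arXiv:2308.04475 — 2 statements merged into one kernel-verified Lean document; each statement's English description precedes it below -/
import Mathlib

section
/- Let G be a finite simple graph with adjacency matrix A (over the reals). Let s⁺ and s⁻ denote the sum of the squares of the positive and of the negative eigenvalues of A, respectively, and let χvec(G) be the vector chromatic number of G. Then s⁺ ≤ (χvec(G) − 1) · s⁻. -/
open Matrix Finset BigOperators

/-- The Frobenius (trace) inner product of two real matrices. -/
noncomputable def frob {n : ℕ} (M N : Matrix (Fin n) (Fin n) ℝ) : ℝ :=
  ∑ u, ∑ v, M u v * N u v

/-- The all-ones matrix. -/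
noncomputable def matJ (n : ℕ) : Matrix (Fin n) (Fin n) ℝ :=
  Matrix.of fun _ _ => (1 : ℝ)

/-- The vector chromatic number of `G`: the supremum of `⟨J, Z⟩` over all real symmetric,
entrywise nonnegative, positive semidefinite matrices `Z` with trace `1` whose entries vanish
on distinct non-adjacent pairs of vertices. -/
noncomputable def chiVec {n : ℕ} (G : SimpleGraph (Fin n)) [DecidableRel G.Adj] : ℝ :=
  sSup { x : ℝ | ∃ Z : Matrix (Fin n) (Fin n) ℝ,
    Z.IsSymm ∧ (∀ u v, 0 ≤ Z u v) ∧ Z.PosSemidef ∧ Z.trace = 1 ∧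
    (∀ u v, u ≠ v → ¬ G.Adj u v → Z u v = 0) ∧ x = frob (matJ n) Z }

/-- The adjacency matrix of a graph is hermitian (it is real symmetric). -/
theorem adjHerm {n : ℕ} (G : SimpleGraph (Fin n)) [DecidableRel G.Adj] :
    (G.adjMatrix ℝ).IsHermitian :=
  (Matrix.conjTranspose_eq_transpose_of_trivial _).trans G.isSymm_adjMatrix

/-- `s⁺`: the sum of the squares of the positive eigenvalues of the adjacency matrix,
counted with multiplicity. -/
noncomputable def sPlus {n : ℕ} (G : SimpleGraph (Fin n)) [DecidableRel G.Adj] : ℝ :=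
  ∑ i, if 0 < (adjHerm G).eigenvalues i then ((adjHerm G).eigenvalues i) ^ 2 else 0

/-- `s⁻`: the sum of the squares of the negative eigenvalues of the adjacency matrix,
counted with multiplicity. -/
noncomputable def sMinus {n : ℕ} (G : SimpleGraph (Fin n)) [DecidableRel G.Adj] : ℝ :=
  ∑ i, if (adjHerm G).eigenvalues i < 0 then ((adjHerm G).eigenvalues i) ^ 2 else 0

/-- `A⁺ = Σ_{θ>0} θ E_θ`: the positive part of the adjacency matrix, obtained from its
spectral decomposition. -/
noncomputable def Aplus {n : ℕ} (G : SimpleGraph (Fin n)) [DecidableRel G.Adj] :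
    Matrix (Fin n) (Fin n) ℝ :=
  ((adjHerm G).eigenvectorUnitary : Matrix (Fin n) (Fin n) ℝ) *
    diagonal (fun i => if 0 < (adjHerm G).eigenvalues i then (adjHerm G).eigenvalues i else 0) *
    star ((adjHerm G).eigenvectorUnitary : Matrix (Fin n) (Fin n) ℝ)

/-- `A⁻ = -Σ_{λ<0} λ E_λ`: the negative part of the adjacency matrix, obtained from its
spectral decomposition. -/
noncomputable def Aminus {n : ℕ} (G : SimpleGraph (Fin n)) [DecidableRel G.Adj] :
    Matrix (Fin n) (Fin n) ℝ :=
  ((adjHerm G).eigenvectorUnitary : Matrix (Fin n) (Fin n) ℝ) *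
    diagonal (fun i => if (adjHerm G).eigenvalues i < 0 then -(adjHerm G).eigenvalues i else 0) *
    star ((adjHerm G).eigenvectorUnitary : Matrix (Fin n) (Fin n) ℝ)

/-- The quadratic form of a real positive semidefinite matrix as a double sum. -/
lemma psd_iff_sum {n : ℕ} (M : Matrix (Fin n) (Fin n) ℝ) :
    M.PosSemidef ↔ (∀ u v, M u v = M v u) ∧ ∀ x : Fin n → ℝ,
      0 ≤ ∑ u, ∑ v, M u v * (x u * x v) := by
  rw [Matrix.posSemidef_iff_dotProduct_mulVec]
  apply and_congr
  · constructor
    · intro h u v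
      have := h.apply u v
      simpa using this.symm
    · intro h
      ext u v
      simpa using h v u
  · apply forall_congr'
    intro x
    have : star x ⬝ᵥ (M *ᵥ x) = ∑ u, ∑ v, M u v * (x u * x v) := by
      simp only [dotProduct, mulVec, Finset.mul_sum]
      refine Finset.sum_congr rfl fun u _ => Finset.sum_congr rfl fun v _ => ?_
      simp only [Pi.star_apply, star_trivial]
      ring
    rw [this]

/-- A graph Laplacian with nonnegative weights is positive semidefinite. -/
lemma lap_psd {n : ℕ} (S : Matrix (Fin n) (Fin n) ℝ) (hs : ∀ u v, S u v = S v u)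
    (h0 : ∀ u v, 0 ≤ S u v) : (diagonal (fun u => ∑ v, S u v) - S).PosSemidef := by
  rw [psd_iff_sum]
  constructor
  · intro u v
    by_cases h : u = v
    · subst h; rfl
    · simp [Matrix.diagonal_apply_ne _ h, Matrix.diagonal_apply_ne _ (Ne.symm h), hs u v]
  · intro x
    have e1 : ∑ u, ∑ v, (diagonal (fun u => ∑ v, S u v) - S) u v * (x u * x v)
        = ∑ u, ∑ v, S u v * (x u * x u) - ∑ u, ∑ v, S u v * (x u * x v) := by
      rw [← Finset.sum_sub_distrib]
      refine Finset.sum_congr rfl fun u _ => ?_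
      simp only [Matrix.sub_apply, sub_mul, Finset.sum_sub_distrib, Matrix.diagonal_apply,
        ite_mul, zero_mul, Finset.sum_ite_eq, Finset.mem_univ, if_true, Finset.sum_mul]
    have e2 : ∑ u, ∑ v, S u v * (x u * x u) = ∑ u, ∑ v, S u v * (x v * x v) := by
      rw [Finset.sum_comm]
      refine Finset.sum_congr rfl fun u _ => Finset.sum_congr rfl fun v _ => ?_
      rw [hs]
    have e3 : 0 ≤ ∑ u, ∑ v, S u v * (x u - x v) ^ 2 :=
      Finset.sum_nonneg fun u _ => Finset.sum_nonneg fun v _ =>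
        mul_nonneg (h0 u v) (sq_nonneg _)
    have e4 : ∑ u, ∑ v, S u v * (x u - x v) ^ 2 = ∑ u, ∑ v, S u v * (x u * x u)
        + ∑ u, ∑ v, S u v * (x v * x v) - 2 * ∑ u, ∑ v, S u v * (x u * x v) := by
      simp only [Finset.mul_sum, ← Finset.sum_add_distrib, ← Finset.sum_sub_distrib]
      refine Finset.sum_congr rfl fun u _ => Finset.sum_congr rfl fun v _ => ?_
      ring
    rw [e1]
    linarith

/-- The sum of the entries of a PSD matrix is at most `n` times its trace. -/
lemma psd_sum_le {n : ℕ} (Z : Matrix (Fin n) (Fin n) ℝ) (h : Z.PosSemidef) :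
    ∑ u, ∑ v, Z u v ≤ n * Z.trace := by
  have h2 := (psd_iff_sum Z).1 h
  have key : ∀ u v, Z u v ≤ (Z u u + Z v v) / 2 := by
    intro u v
    have := h2.2 (fun w => (if w = u then 1 else 0) - (if w = v then 1 else 0))
    simp only [sub_mul, mul_sub, Finset.sum_sub_distrib, mul_ite, mul_one, mul_zero, ite_mul,
      one_mul, zero_mul, Finset.sum_ite_eq', Finset.sum_ite_eq, Finset.mem_univ, if_true,
      Finset.sum_ite_irrel, Finset.sum_const_zero] at this
    have := h2.1 u v
    linarith
  calc ∑ u, ∑ v, Z u v ≤ ∑ u, ∑ v, (Z u u + Z v v) / 2 :=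
        Finset.sum_le_sum fun u _ => Finset.sum_le_sum fun v _ => key u v
    _ = n * Z.trace := by
        simp only [← Finset.sum_div, Finset.sum_add_distrib, Finset.sum_const, Finset.card_univ,
          Fintype.card_fin, nsmul_eq_mul, Matrix.trace, Matrix.diag, ← Finset.mul_sum]
        ring

lemma frob_matJ {n : ℕ} (Z : Matrix (Fin n) (Fin n) ℝ) :
    frob (matJ n) Z = ∑ u, ∑ v, Z u v := by
  simp [frob, matJ]

lemma chiVec_nonneg {n : ℕ} (G : SimpleGraph (Fin n)) [DecidableRel G.Adj] : 0 ≤ chiVec G := by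
  apply Real.sSup_nonneg
  rintro x ⟨Z, -, h0, -, -, -, rfl⟩
  rw [frob_matJ]
  exact Finset.sum_nonneg fun u _ => Finset.sum_nonneg fun v _ => h0 u v

lemma sum_le_chiVec {n : ℕ} (G : SimpleGraph (Fin n)) [DecidableRel G.Adj]
    (Z : Matrix (Fin n) (Fin n) ℝ) (h0 : ∀ u v, 0 ≤ Z u v) (hZ : Z.PosSemidef)
    (hG : ∀ u v, u ≠ v → ¬ G.Adj u v → Z u v = 0) :
    ∑ u, ∑ v, Z u v ≤ chiVec G * Z.trace := by
  have hs := ((psd_iff_sum Z).1 hZ).1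
  have hb := psd_sum_le Z hZ
  rcases (hZ.trace_nonneg).eq_or_lt with ht | ht
  · rw [← ht] at hb ⊢
    simpa using hb
  · have hle : frob (matJ n) (Z.trace⁻¹ • Z) ≤ chiVec G := by
      apply le_csSup
      · refine ⟨n, ?_⟩
        rintro x ⟨Y, -, -, hY, hY1, -, rfl⟩
        have := psd_sum_le Y hY
        rw [frob_matJ]
        rw [hY1] at this
        linarith
      · refine ⟨_, ?_, ?_, ?_, ?_, ?_, rfl⟩
        · ext u v
          simp [hs u v]
        · intro u v
          exact mul_nonneg (inv_nonneg.2 ht.le) (h0 u v)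
        · exact hZ.smul (inv_nonneg.2 ht.le)
        · rw [Matrix.trace_smul, smul_eq_mul, inv_mul_cancel₀ ht.ne']
        · intro u v h1 h2
          simp [hG u v h1 h2]
    rw [frob_matJ] at hle
    simp only [Matrix.smul_apply, smul_eq_mul, ← Finset.mul_sum] at hle
    rw [inv_mul_le_iff₀ ht] at hle
    linarith

/-- Main combinatorial inequality for nonnegative PSD matrices. -/
lemma key_ineq {n : ℕ} (G : SimpleGraph (Fin n)) [DecidableRel G.Adj]
    (Q : Matrix (Fin n) (Fin n) ℝ) (h0 : ∀ u v, 0 ≤ Q u v) (hQ : Q.PosSemidef) :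
    ∑ u, ∑ v, Q u v ≤
      chiVec G * (∑ u, ∑ v, Q u v - ∑ u, ∑ v, G.adjMatrix ℝ u v * Q u v) := by
  have hs := ((psd_iff_sum Q).1 hQ).1
  let S : Matrix (Fin n) (Fin n) ℝ :=
    Matrix.of fun u v => if u = v ∨ G.Adj u v then 0 else Q u v
  have hS : ∀ u v, S u v = if u = v ∨ G.Adj u v then 0 else Q u v := fun _ _ => rfl
  have S0 : ∀ u v, 0 ≤ S u v := by
    intro u v; rw [hS]; split_ifs
    · exact le_rfl
    · exact h0 u v
  have Ss : ∀ u v, S u v = S v u := by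
    intro u v
    simp only [hS, G.adj_comm u v, eq_comm (a := u), hs u v]
  have hp := hQ.add (lap_psd S Ss S0)
  have hent : ∀ u v, (Q + (diagonal (fun u => ∑ v, S u v) - S)) u v
      = Q u v + ((if u = v then ∑ w, S u w else 0) - S u v) := by
    intro u v
    simp [Matrix.diagonal_apply]
  have main := sum_le_chiVec G _ ?_ hp ?_
  · have e1 : ∑ u, ∑ v, (Q + (diagonal (fun u => ∑ v, S u v) - S)) u v = ∑ u, ∑ v, Q u v := by
      simp only [hent, Finset.sum_add_distrib, Finset.sum_sub_distrib, Finset.sum_ite_eq,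
        Finset.mem_univ, if_true]
      ring
    have e2 : (Q + (diagonal (fun u => ∑ v, S u v) - S)).trace
        = ∑ u, ∑ v, Q u v - ∑ u, ∑ v, G.adjMatrix ℝ u v * Q u v := by
      simp only [Matrix.trace, Matrix.diag, hent, ← Finset.sum_sub_distrib]
      refine Finset.sum_congr rfl fun u _ => ?_
      have : Q u u = ∑ v, if u = v then Q u v else 0 := by simp
      rw [this]
      simp only [if_true, hS u u, true_or, sub_zero]
      rw [← Finset.sum_add_distrib]
      refine Finset.sum_congr rfl fun v _ => ?_
      rw [hS, SimpleGraph.adjMatrix_apply]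
      by_cases h1 : u = v
      · subst h1; simp
      · by_cases h2 : G.Adj u v <;> simp [h1, h2]
    rw [e1, e2] at main
    exact main
  · intro u v
    rw [hent]
    by_cases h1 : u = v
    · subst h1
      have : 0 ≤ ∑ w, S u w := Finset.sum_nonneg fun w _ => S0 u w
      have := h0 u u
      simp only [if_true, hS u u, true_or]
      linarith
    · rw [if_neg h1, hS]
      have := h0 u v
      split_ifs <;> linarith
  · intro u v h1 h2
    rw [hent, hS]
    simp [h1, h2]

/-- Frobenius products of simultaneously diagonalised matrices. -/
lemma frob_conj {n : ℕ} (U : Matrix.unitaryGroup (Fin n) ℝ) (a b : Fin n → ℝ) :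
    frob ((U : Matrix (Fin n) (Fin n) ℝ) * diagonal a * star (U : Matrix (Fin n) (Fin n) ℝ))
      ((U : Matrix (Fin n) (Fin n) ℝ) * diagonal b * star (U : Matrix (Fin n) (Fin n) ℝ))
      = ∑ i, a i * b i := by
  have hU : star (U : Matrix (Fin n) (Fin n) ℝ) * (U : Matrix (Fin n) (Fin n) ℝ) = 1 :=
    Unitary.coe_star_mul_self U
  have h1 : ∀ M N : Matrix (Fin n) (Fin n) ℝ, frob M N = (M * Nᵀ).trace := by
    intro M N
    simp [frob, Matrix.trace, Matrix.mul_apply]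
  have h2 : ((U : Matrix (Fin n) (Fin n) ℝ) * diagonal b *
      star (U : Matrix (Fin n) (Fin n) ℝ))ᵀ = (U : Matrix (Fin n) (Fin n) ℝ) * diagonal b *
      star (U : Matrix (Fin n) (Fin n) ℝ) := by
    simp [Matrix.star_eq_conjTranspose, Matrix.conjTranspose_eq_transpose_of_trivial,
      Matrix.transpose_mul, Matrix.mul_assoc]
  rw [h1, h2]
  have h3 : (U : Matrix (Fin n) (Fin n) ℝ) * diagonal a * star (U : Matrix (Fin n) (Fin n) ℝ) *
      ((U : Matrix (Fin n) (Fin n) ℝ) * diagonal b * star (U : Matrix (Fin n) (Fin n) ℝ))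
      = (U : Matrix (Fin n) (Fin n) ℝ) * (diagonal a * diagonal b) *
        star (U : Matrix (Fin n) (Fin n) ℝ) := by
    calc _ = (U : Matrix (Fin n) (Fin n) ℝ) * diagonal a *
          (star (U : Matrix (Fin n) (Fin n) ℝ) * (U : Matrix (Fin n) (Fin n) ℝ)) *
          diagonal b * star (U : Matrix (Fin n) (Fin n) ℝ) := by simp only [Matrix.mul_assoc]
      _ = _ := by rw [hU]; simp only [Matrix.mul_assoc, Matrix.one_mul]
  rw [h3, Matrix.trace_mul_comm, ← Matrix.mul_assoc, hU, Matrix.one_mul, diagonal_mul_diagonal,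
    Matrix.trace_diagonal]

lemma adj_spec {n : ℕ} (G : SimpleGraph (Fin n)) [DecidableRel G.Adj] :
    G.adjMatrix ℝ = ((adjHerm G).eigenvectorUnitary : Matrix (Fin n) (Fin n) ℝ) *
      diagonal (adjHerm G).eigenvalues *
      star ((adjHerm G).eigenvectorUnitary : Matrix (Fin n) (Fin n) ℝ) := by
  have h := (adjHerm G).spectral_theorem
  rw [Unitary.conjStarAlgAut_apply] at h
  exact h

lemma Aplus_psd {n : ℕ} (G : SimpleGraph (Fin n)) [DecidableRel G.Adj] :
    (Aplus G).PosSemidef := by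
  unfold Aplus
  rw [Matrix.star_eq_conjTranspose]
  apply Matrix.PosSemidef.mul_mul_conjTranspose_same
  apply Matrix.PosSemidef.diagonal
  intro i
  simp only [Pi.zero_apply]
  split_ifs with h
  · exact h.le
  · exact le_rfl

/-- For every graph `G`, `s⁺ ≤ (χvec(G) − 1) · s⁻`. -/
theorem sPlus_le_chiVec_sub_one_mul_sMinus {n : ℕ} (G : SimpleGraph (Fin n))
    [DecidableRel G.Adj] :
    sPlus G ≤ (chiVec G - 1) * sMinus G := by
  have hPP : frob (Aplus G) (Aplus G) = sPlus G := by
    unfold Aplus sPlus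
    rw [frob_conj]
    refine Finset.sum_congr rfl fun i _ => ?_
    split_ifs <;> ring
  have hAP : frob (G.adjMatrix ℝ) (Aplus G) = sPlus G := by
    refine (congrArg (fun M => frob M (Aplus G)) (adj_spec G)).trans ?_
    beta_reduce
    unfold Aplus sPlus
    rw [frob_conj]
    refine Finset.sum_congr rfl fun i _ => ?_
    split_ifs <;> ring
  have hAA : frob (G.adjMatrix ℝ) (G.adjMatrix ℝ) = sPlus G + sMinus G := by
    refine (congrArg (fun M => frob M M) (adj_spec G)).trans ?_
    beta_reduce
    unfold sPlus sMinus
    rw [frob_conj, ← Finset.sum_add_distrib]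
    refine Finset.sum_congr rfl fun i _ => ?_
    rcases lt_trichotomy ((adjHerm G).eigenvalues i) 0 with h | h | h
    · rw [if_neg h.not_gt, if_pos h]; ring
    · simp [h]
    · rw [if_pos h, if_neg h.not_gt]; ring
  have hs0 : 0 ≤ sPlus G := Finset.sum_nonneg fun i _ => by split_ifs <;> positivity
  have ht0 : 0 ≤ sMinus G := Finset.sum_nonneg fun i _ => by split_ifs <;> positivity
  have hchi := chiVec_nonneg G
  have hkey := key_ineq G (Aplus G ⊙ Aplus G) (fun u v => mul_self_nonneg _)
    ((Aplus_psd G).hadamard (Aplus_psd G))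
  have hsum : ∑ u, ∑ v, (Aplus G ⊙ Aplus G) u v = sPlus G := hPP
  rw [hsum] at hkey
  set b := ∑ u, ∑ v, G.adjMatrix ℝ u v * (Aplus G ⊙ Aplus G) u v with hb
  have hCS : sPlus G ^ 2 ≤ (sPlus G + sMinus G) * b := by
    have := Finset.sum_mul_sq_le_sq_mul_sq (Finset.univ : Finset (Fin n × Fin n))
      (fun p => G.adjMatrix ℝ p.1 p.2) (fun p => G.adjMatrix ℝ p.1 p.2 * Aplus G p.1 p.2)
    rw [Fintype.sum_prod_type, Fintype.sum_prod_type, Fintype.sum_prod_type] at this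
    have i1 : ∀ u v, G.adjMatrix ℝ u v * G.adjMatrix ℝ u v = G.adjMatrix ℝ u v := by
      intro u v
      rw [SimpleGraph.adjMatrix_apply]
      split_ifs <;> simp
    have j1 : ∑ u, ∑ v, G.adjMatrix ℝ u v * (G.adjMatrix ℝ u v * Aplus G u v) = sPlus G := by
      rw [← hAP]
      unfold frob
      refine Finset.sum_congr rfl fun u _ => Finset.sum_congr rfl fun v _ => ?_
      rw [← mul_assoc, i1]
    have j2 : ∑ u, ∑ v, G.adjMatrix ℝ u v ^ 2 = sPlus G + sMinus G := by
      rw [← hAA]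
      unfold frob
      refine Finset.sum_congr rfl fun u _ => Finset.sum_congr rfl fun v _ => ?_
      ring
    have j3 : ∑ u, ∑ v, (G.adjMatrix ℝ u v * Aplus G u v) ^ 2 = b := by
      rw [hb]
      refine Finset.sum_congr rfl fun u _ => Finset.sum_congr rfl fun v _ => ?_
      rw [Matrix.hadamard_apply, mul_pow, pow_two (G.adjMatrix ℝ u v), i1]
      ring
    rw [← j1, ← j3]
    rw [← j1] at j2
    rw [← j2]
    exact this
  rcases hs0.eq_or_lt with h | h
  · -- no positive eigenvalues: then all eigenvalues vanish
    have hz : ∀ i, (adjHerm G).eigenvalues i ≤ 0 := by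
      intro i
      by_contra hc
      push Not at hc
      have h1 := (Finset.sum_eq_zero_iff_of_nonneg (fun i _ => by
        split_ifs <;> positivity)).1 h.symm i (Finset.mem_univ i)
      rw [if_pos hc] at h1
      exact (pow_pos hc 2).ne' h1
    have htr : ∑ i, (adjHerm G).eigenvalues i = 0 := by
      have := (adjHerm G).trace_eq_sum_eigenvalues
      rw [SimpleGraph.trace_adjMatrix] at this
      simpa using this.symm
    have hall := (Finset.sum_eq_zero_iff_of_nonpos (fun i _ => hz i)).1 htr
    have : sMinus G = 0 := Finset.sum_eq_zero fun i hi => by rw [hall i hi]; simp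
    rw [this, ← h]
    simp
  · have h1 : sPlus G * (sPlus G + sMinus G) ≤
        chiVec G * (sPlus G - b) * (sPlus G + sMinus G) :=
      mul_le_mul_of_nonneg_right hkey (by positivity)
    have h2 := mul_le_mul_of_nonneg_left hCS hchi
    have h3 : sPlus G * (sPlus G + sMinus G) ≤ sPlus G * (chiVec G * sMinus G) := by
      nlinarith
    have := le_of_mul_le_mul_left h3 h
    linarith
end

section
/- Let G be a finite simple graph with adjacency matrix A over the reals, and let Ā denote the adjacency matrix of the complement of G. Then the vector chromatic number χvec(G), defined as the supremum of ⟨J, Z⟩ over all entrywise nonnegative positive semidefinite real symmetric matrices Z with trace Z = 1 and Z_{uv} = 0 for all distinct non-adjacent u, v, equals the supremum of ⟨J, Z⟩ over all entrywise nonnegative positive semidefinite real symmetric matrices Z satisfying ⟨I + Ā, Z⟩ = 1. -/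
open Matrix Finset BigOperators

/-- Weighted Laplacians with nonnegative symmetric weights are positive semidefinite. -/
theorem lap_posSemidef {n : ℕ} (W : Matrix (Fin n) (Fin n) ℝ) (hs : ∀ u v, W u v = W v u)
    (h0 : ∀ u v, 0 ≤ W u v) :
    (diagonal (fun u => ∑ v, W u v) - W).PosSemidef := by
  refine Matrix.PosSemidef.of_dotProduct_mulVec_nonneg ?_ ?_
  · ext u v
    by_cases h : u = v
    · subst h; simp
    · simp [Matrix.diagonal_apply_ne _ h, Matrix.diagonal_apply_ne _ (Ne.symm h), hs u v]
  · intro x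
    have e1 : star x ⬝ᵥ ((diagonal (fun u => ∑ v, W u v) - W) *ᵥ x)
        = ∑ u, ∑ v, (W u v * x u ^ 2 - W u v * (x u * x v)) := by
      rw [Matrix.sub_mulVec, dotProduct_sub]
      simp only [dotProduct, Matrix.mulVec_diagonal, Finset.sum_sub_distrib]
      congr 1
      · refine Finset.sum_congr rfl fun u _ => ?_
        rw [← Finset.sum_mul]
        simp only [Pi.star_apply, star_trivial]
        ring
      · refine Finset.sum_congr rfl fun u _ => ?_
        simp only [Matrix.mulVec, dotProduct, Finset.mul_sum, Pi.star_apply, star_trivial]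
        refine Finset.sum_congr rfl fun v _ => ?_
        ring
    have e2 : ∑ u, ∑ v, (W u v * x u ^ 2 - W u v * (x u * x v))
        = ∑ u, ∑ v, (W u v * x v ^ 2 - W u v * (x u * x v)) := by
      rw [Finset.sum_comm]
      refine Finset.sum_congr rfl fun u _ => Finset.sum_congr rfl fun v _ => ?_
      rw [hs v u]; ring
    have e3 : (∑ u, ∑ v, (W u v * x u ^ 2 - W u v * (x u * x v)))
        + ∑ u, ∑ v, (W u v * x v ^ 2 - W u v * (x u * x v))
        = ∑ u, ∑ v, W u v * (x u - x v) ^ 2 := by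
      simp only [← Finset.sum_add_distrib]
      refine Finset.sum_congr rfl fun u _ => Finset.sum_congr rfl fun v _ => ?_
      ring
    have e4 : 0 ≤ ∑ u, ∑ v, W u v * (x u - x v) ^ 2 :=
      Finset.sum_nonneg fun u _ => Finset.sum_nonneg fun v _ =>
        mul_nonneg (h0 u v) (sq_nonneg _)
    rw [e1]
    linarith

theorem frob_one_add {n : ℕ} (M Z : Matrix (Fin n) (Fin n) ℝ) :
    frob (1 + M) Z = Z.trace + ∑ u, ∑ v, M u v * Z u v := by
  simp [frob, add_mul, Finset.sum_add_distrib, Matrix.trace, Matrix.one_apply]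

/-- The vector chromatic number equals the supremum of `⟨J, Z⟩` over all entrywise nonnegative
positive semidefinite real symmetric matrices `Z` satisfying `⟨I + Ā, Z⟩ = 1`, where `Ā` is the
adjacency matrix of the complement of `G`. -/
theorem chiVec_eq_sSup_alt {n : ℕ} (G : SimpleGraph (Fin n)) [DecidableRel G.Adj] :
    chiVec G = sSup { x : ℝ | ∃ Z : Matrix (Fin n) (Fin n) ℝ,
      Z.IsSymm ∧ (∀ u v, 0 ≤ Z u v) ∧ Z.PosSemidef ∧
      frob (1 + Gᶜ.adjMatrix ℝ) Z = 1 ∧ x = frob (matJ n) Z } := by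
  unfold chiVec
  congr 1
  ext x
  constructor
  · rintro ⟨Z, hS, h0, hP, hT, hZ, rfl⟩
    refine ⟨Z, hS, h0, hP, ?_, rfl⟩
    rw [frob_one_add, hT, add_eq_left]
    refine Finset.sum_eq_zero fun u _ => Finset.sum_eq_zero fun v _ => ?_
    by_cases h : Gᶜ.Adj u v
    · rw [hZ u v h.1 ((SimpleGraph.compl_adj G u v).1 h).2, mul_zero]
    · simp [SimpleGraph.adjMatrix_apply, h]
  · rintro ⟨Z, hS, h0, hP, hT, rfl⟩
    rw [frob_one_add] at hT
    let W : Matrix (Fin n) (Fin n) ℝ := Matrix.of fun u v => Gᶜ.adjMatrix ℝ u v * Z u v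
    have hW : ∀ u v, W u v = if Gᶜ.Adj u v then Z u v else 0 := by
      intro u v
      simp [W, SimpleGraph.adjMatrix_apply]
    have hWs : ∀ u v, W u v = W v u := by
      intro u v
      rw [hW, hW, hS.apply u v]
      simp only [SimpleGraph.adj_comm]
    have hW0 : ∀ u v, 0 ≤ W u v := by
      intro u v
      rw [hW]; split_ifs
      · exact h0 u v
      · exact le_rfl
    have hWle : ∀ u v, W u v ≤ Z u v := by
      intro u v
      rw [hW]; split_ifs
      · exact le_rfl
      · exact h0 u v
    have hWd : ∀ u, W u u = 0 := by
      intro u; rw [hW]; simp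
    have hPos := hP.add (lap_posSemidef W hWs hW0)
    refine ⟨Z + (diagonal (fun u => ∑ v, W u v) - W), ?_, ?_, hPos, ?_, ?_, ?_⟩
    · have := hPos.1
      rwa [Matrix.IsHermitian, Matrix.conjTranspose_eq_transpose_of_trivial] at this
    · intro u v
      have hd : 0 ≤ diagonal (fun u => ∑ v, W u v) u v := by
        rw [Matrix.diagonal_apply]; split_ifs
        · exact Finset.sum_nonneg fun v _ => hW0 u v
        · exact le_rfl
      have := hWle u v
      simp only [Matrix.add_apply, Matrix.sub_apply]
      linarith
    · rw [← hT, Matrix.trace_add, Matrix.trace_sub, Matrix.trace_diagonal]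
      have : W.trace = 0 := by simp [Matrix.trace, hWd]
      rw [this, sub_zero]
      rfl
    · intro u v huv hadj
      have : Gᶜ.Adj u v := (SimpleGraph.compl_adj G u v).2 ⟨huv, hadj⟩
      simp [Matrix.diagonal_apply_ne _ huv, hW, this]
    · simp [frob, matJ, Finset.sum_add_distrib, Finset.sum_sub_distrib, Matrix.diagonal_apply]
end
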